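/- arXiv:solv-int/9902003 — 2 statements merged into one kernel-verified Lean document; each statement's English description precedes it below -/
import Mathlib

section
/- Fix α, ε ∈ ℝ and j ∈ {1,2}. The Miura map M_j^{(+)}(α;ε) : ℳℛ𝒯 → ℛ𝒯 is a Poisson map (i) from ℳℛ𝒯 equipped with {·,·}_{12α} to ℛ𝒯 equipped with {·,·}_{1α} + ε{·,·}_{2α}, and (ii) from ℳℛ𝒯 equipped with {·,·}_{23α} to ℛ𝒯 equipped with {·,·}_{2α} + ε{·,·}_{3α}, on the open sets where 1 + εαq_k ≠ 0 for all k (i.e. DM_j^{(+)}(α;ε)(x)·J(x)·DM_j^{(+)}(α;ε)(x)ᵀ = J'(M_j^{(+)}(α;ε)(x)) for the respective structure matrices). Moreover, the pull-back of the flow RTL_+(α) under M_j^{(+)}(α;ε) coincides with MRTL_+^{(+)}(α;ε), and, on the open set where additionally all denominators of RTL_−(α) and MRTL_−^{(+)}(α;ε) are nonzero, the pull-back of RTL_−(α) under M_j^{(+)}(α;ε) coincides with MRTL_−^{(+)}(α;ε). -/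
open scoped BigOperators

/-- Index set for the periodic phase space `ℝ^{2N}`: `Sum.inl k` indexes the first
family of coordinates and `Sum.inr k` the second family, `k ∈ ℤ/Nℤ`. -/
abbrev Idx (N : ℕ) : Type := (ZMod N) ⊕ (ZMod N)

/-- The phase space `ℝ^{2N}`. -/
abbrev Phase (N : ℕ) : Type := Idx N → ℝ

/-- First family of coordinates. -/
def c1 {N : ℕ} (x : Phase N) (k : ZMod N) : ℝ := x (Sum.inl k)

/-- Second family of coordinates. -/
def c2 {N : ℕ} (x : Phase N) (k : ZMod N) : ℝ := x (Sum.inr k)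

/-- A structure matrix on `Phase N`. -/
abbrev SM (N : ℕ) : Type := Phase N → Idx N → Idx N → ℝ

/-- Partial derivative of `F` at `x` in the `i`-th coordinate direction. -/
noncomputable def pderiv {N : ℕ} [NeZero N] (i : Idx N) (F : Phase N → ℝ)
    (x : Phase N) : ℝ :=
  fderiv ℝ F x (Pi.single i 1)

/-- The bracket of two functions associated with a structure matrix `J`:
`{F,G}(x) = ∑_{i,j} ∂_i F(x) · J_{ij}(x) · ∂_j G(x)`. -/
noncomputable def bracket {N : ℕ} [NeZero N] (J : SM N) (F G : Phase N → ℝ)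
    (x : Phase N) : ℝ :=
  ∑ i : Idx N, ∑ j : Idx N, pderiv i F x * J x i j * pderiv j G x

/-- The Jacobi identity for `J` holds at every point satisfying `P`. -/
def JacobiOn {N : ℕ} [NeZero N] (J : SM N) (P : Phase N → Prop) : Prop :=
  ∀ F G H : Phase N → ℝ, ContDiff ℝ (⊤ : ℕ∞) F → ContDiff ℝ (⊤ : ℕ∞) G →
    ContDiff ℝ (⊤ : ℕ∞) H → ∀ x : Phase N, P x →
      bracket J (bracket J F G) H x + bracket J (bracket J G H) F x +
        bracket J (bracket J H F) G x = 0

/-- `J` defines a Poisson bracket: the Jacobi identity holds everywhere. -/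
def IsPoisson {N : ℕ} [NeZero N] (J : SM N) : Prop :=
  JacobiOn J fun _ => True

/-- `f(x) = J(x)∇H(x)`: the vector field `f` is Hamiltonian at `x` with respect
to the structure matrix `J`, with Hamilton function `H`. -/
def HamAt {N : ℕ} [NeZero N] (J : SM N) (f : Phase N → Phase N)
    (H : Phase N → ℝ) (x : Phase N) : Prop :=
  ∀ i : Idx N, f x i = ∑ j : Idx N, J x i j * pderiv j H x

/-- `Dφ(x)·J(x)·Dφ(x)ᵀ = J'(φ(x))`: `φ` is a Poisson map at `x` from the
structure matrix `J` to the structure matrix `J'`. -/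
def PoissonMapAt {N : ℕ} [NeZero N] (φ : Phase N → Phase N) (J J' : SM N)
    (x : Phase N) : Prop :=
  ∀ i j : Idx N,
    (∑ k : Idx N, ∑ l : Idx N,
      pderiv k (fun y => φ y i) x * J x k l * pderiv l (fun y => φ y j) x)
      = J' (φ x) i j

/-- `Dφ(x)·f(x) = g(φ(x))`: the vector field `f` is the pull-back of the vector
field `g` under `φ`, at the point `x`. -/
def PullbackAt {N : ℕ} [NeZero N] (φ : Phase N → Phase N)
    (f g : Phase N → Phase N) (x : Phase N) : Prop :=
  ∀ i : Idx N, (∑ k : Idx N, pderiv k (fun y => φ y i) x * f x k) = g (φ x) i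

/-- Quadratic Toda structure matrix `J₂`: `{b_k,a_k} = -b_k a_k`,
`{a_k,b_{k+1}} = -a_k b_{k+1}`, `{b_k,b_{k+1}} = -a_k`, `{a_k,a_{k+1}} = -a_k a_{k+1}`. -/
noncomputable def JT2 {N : ℕ} (x : Phase N) : Idx N → Idx N → ℝ := fun i₁ i₂ =>
  match i₁, i₂ with
  | Sum.inl j, Sum.inr k =>
      if j = k then -(c1 x k * c2 x k)
      else if j = k + 1 then c2 x k * c1 x (k + 1) else 0
  | Sum.inr k, Sum.inl j =>
      if j = k then c1 x k * c2 x k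
      else if j = k + 1 then -(c2 x k * c1 x (k + 1)) else 0
  | Sum.inl j, Sum.inl l =>
      if l = j + 1 then -c2 x j else if j = l + 1 then c2 x l else 0
  | Sum.inr j, Sum.inr l =>
      if l = j + 1 then -(c2 x j * c2 x (j + 1))
      else if j = l + 1 then c2 x l * c2 x (l + 1) else 0

/-- Relativistic Toda structure matrix `J_{1α}`: `{b_k,a_k} = -a_k`,
`{a_k,b_{k+1}} = -a_k`, `{b_k,b_{k+1}} = αa_k`. -/
noncomputable def JR1 (α : ℝ) {N : ℕ} (x : Phase N) : Idx N → Idx N → ℝ := fun i₁ i₂ =>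
  match i₁, i₂ with
  | Sum.inl j, Sum.inr k =>
      if j = k then -c2 x k else if j = k + 1 then c2 x k else 0
  | Sum.inr k, Sum.inl j =>
      if j = k then c2 x k else if j = k + 1 then -c2 x k else 0
  | Sum.inl j, Sum.inl l =>
      if l = j + 1 then α * c2 x j else if j = l + 1 then -(α * c2 x l) else 0
  | _, _ => 0

/-- Relativistic Toda structure matrix `J_{3α}`. -/
noncomputable def JR3 (α : ℝ) {N : ℕ} (x : Phase N) : Idx N → Idx N → ℝ := fun i₁ i₂ =>
  match i₁, i₂ with
  | Sum.inl j, Sum.inr k =>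
      if j = k then -(c2 x k * ((c1 x k) ^ 2 + c2 x k)) - α * c1 x k * (c2 x k) ^ 2
      else if j = k + 1 then
        c2 x k * ((c1 x (k + 1)) ^ 2 + c2 x k) + α * (c2 x k) ^ 2 * c1 x (k + 1)
      else if k = j + 1 then
        -(c2 x j * c2 x k) - α * c1 x j * c2 x j * c2 x k
      else if j = k + 2 then
        c2 x k * c2 x (k + 1) + α * c2 x k * c2 x (k + 1) * c1 x (k + 2)
      else 0
  | Sum.inr k, Sum.inl j =>
      if j = k then c2 x k * ((c1 x k) ^ 2 + c2 x k) + α * c1 x k * (c2 x k) ^ 2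
      else if j = k + 1 then
        -(c2 x k * ((c1 x (k + 1)) ^ 2 + c2 x k)) - α * (c2 x k) ^ 2 * c1 x (k + 1)
      else if k = j + 1 then
        c2 x j * c2 x k + α * c1 x j * c2 x j * c2 x k
      else if j = k + 2 then
        -(c2 x k * c2 x (k + 1)) - α * c2 x k * c2 x (k + 1) * c1 x (k + 2)
      else 0
  | Sum.inl j, Sum.inl l =>
      if l = j + 1 then
        -(c2 x j * (c1 x j + c1 x (j + 1))) - α * c1 x j * c2 x j * c1 x (j + 1)
      else if j = l + 1 then
        c2 x l * (c1 x l + c1 x (l + 1)) + α * c1 x l * c2 x l * c1 x (l + 1)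
      else 0
  | Sum.inr j, Sum.inr l =>
      if l = j + 1 then
        -(2 * c2 x j * c1 x (j + 1) * c2 x (j + 1))
          - α * c2 x j * c2 x (j + 1) * (c2 x j + c2 x (j + 1))
      else if l = j + 2 then -(α * c2 x j * c2 x (j + 1) * c2 x (j + 2))
      else if j = l + 1 then
        2 * c2 x l * c1 x (l + 1) * c2 x (l + 1)
          + α * c2 x l * c2 x (l + 1) * (c2 x l + c2 x (l + 1))
      else if j = l + 2 then α * c2 x l * c2 x (l + 1) * c2 x (l + 2)
      else 0

/-- The relativistic Toda vector field `RTL₊(α)`. -/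
noncomputable def rtlP (α : ℝ) {N : ℕ} (x : Phase N) : Phase N := fun i =>
  match i with
  | Sum.inl k => (1 + α * c1 x k) * (c2 x k - c2 x (k - 1))
  | Sum.inr k =>
      c2 x k * (c1 x (k + 1) - c1 x k + α * c2 x (k + 1) - α * c2 x (k - 1))

/-- The relativistic Toda vector field `RTL₋(α)`. -/
noncomputable def rtlM (α : ℝ) {N : ℕ} (x : Phase N) : Phase N := fun i =>
  match i with
  | Sum.inl k =>
      c2 x k / (1 + α * c1 x (k + 1)) - c2 x (k - 1) / (1 + α * c1 x (k - 1))
  | Sum.inr k =>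
      c2 x k * (c1 x (k + 1) / (1 + α * c1 x (k + 1)) - c1 x k / (1 + α * c1 x k))

/-- Structure matrix `J_{12α}` on `ℳℛ𝒯`:
`{p_k,q_k} = -q_k(1+εp_k)`, `{q_k,p_{k+1}} = -q_k(1+εp_{k+1})`,
`{p_k,p_{k+1}} = α·q_k(1+εp_k)(1+εp_{k+1})/(1+εαq_k)`. -/
noncomputable def JMR12 (α ε : ℝ) {N : ℕ} (x : Phase N) : Idx N → Idx N → ℝ := fun i₁ i₂ =>
  match i₁, i₂ with
  | Sum.inl j, Sum.inr k =>
      if j = k then -(c2 x k * (1 + ε * c1 x k))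
      else if j = k + 1 then c2 x k * (1 + ε * c1 x (k + 1)) else 0
  | Sum.inr k, Sum.inl j =>
      if j = k then c2 x k * (1 + ε * c1 x k)
      else if j = k + 1 then -(c2 x k * (1 + ε * c1 x (k + 1))) else 0
  | Sum.inl j, Sum.inl l =>
      if l = j + 1 then
        α * c2 x j * (1 + ε * c1 x j) * (1 + ε * c1 x (j + 1)) / (1 + ε * α * c2 x j)
      else if j = l + 1 then
        -(α * c2 x l * (1 + ε * c1 x l) * (1 + ε * c1 x (l + 1)) / (1 + ε * α * c2 x l))
      else 0
  | _, _ => 0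

/-- Structure matrix `J_{23α}` on `ℳℛ𝒯`. -/
noncomputable def JMR23 (α ε : ℝ) {N : ℕ} (x : Phase N) : Idx N → Idx N → ℝ := fun i₁ i₂ =>
  match i₁, i₂ with
  | Sum.inl j, Sum.inr k =>
      if j = k then
        -(c2 x k * (c1 x k + ε * c2 x k + ε * α * c1 x k * c2 x k) * (1 + ε * c1 x k))
      else if j = k + 1 then
        c2 x k * (c1 x (k + 1) + ε * c2 x k + ε * α * c1 x (k + 1) * c2 x k)
          * (1 + ε * c1 x (k + 1))
      else 0
  | Sum.inr k, Sum.inl j =>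
      if j = k then
        c2 x k * (c1 x k + ε * c2 x k + ε * α * c1 x k * c2 x k) * (1 + ε * c1 x k)
      else if j = k + 1 then
        -(c2 x k * (c1 x (k + 1) + ε * c2 x k + ε * α * c1 x (k + 1) * c2 x k)
          * (1 + ε * c1 x (k + 1)))
      else 0
  | Sum.inl j, Sum.inl l =>
      if l = j + 1 then
        -(c2 x j * (1 + ε * c1 x j) * (1 + ε * c1 x (j + 1)) / (1 + ε * α * c2 x j))
      else if j = l + 1 then
        c2 x l * (1 + ε * c1 x l) * (1 + ε * c1 x (l + 1)) / (1 + ε * α * c2 x l)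
      else 0
  | Sum.inr j, Sum.inr l =>
      if l = j + 1 then
        -(c2 x j * c2 x (j + 1) * (1 + ε * c1 x (j + 1)) * (1 + ε * α * c2 x j)
          * (1 + ε * α * c2 x (j + 1)))
      else if j = l + 1 then
        c2 x l * c2 x (l + 1) * (1 + ε * c1 x (l + 1)) * (1 + ε * α * c2 x l)
          * (1 + ε * α * c2 x (l + 1))
      else 0

/-- The vector field `MRTL₊⁽⁺⁾(α;ε)`. -/
noncomputable def mrtlPp (α ε : ℝ) {N : ℕ} (x : Phase N) : Phase N := fun i =>
  match i with
  | Sum.inl k => (1 + α * c1 x k) * (1 + ε * c1 x k) * (c2 x k - c2 x (k - 1))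
  | Sum.inr k =>
      c2 x k * (1 + ε * α * c2 x k) *
        (c1 x (k + 1) + α * c2 x (k + 1) + ε * α * c1 x (k + 1) * c2 x (k + 1)
          - c1 x k - α * c2 x (k - 1) - ε * α * c1 x k * c2 x (k - 1))

/-- The vector field `MRTL₋⁽⁺⁾(α;ε)`. -/
noncomputable def mrtlPm (α ε : ℝ) {N : ℕ} (x : Phase N) : Phase N := fun i =>
  match i with
  | Sum.inl k =>
      (1 + ε * c1 x k) *
        (c2 x k / ((1 + α * c1 x (k + 1)) * (1 + ε * α * c2 x k))
          - c2 x (k - 1) / ((1 + α * c1 x (k - 1)) * (1 + ε * α * c2 x (k - 1))))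
  | Sum.inr k =>
      c2 x k * (c1 x (k + 1) / (1 + α * c1 x (k + 1)) - c1 x k / (1 + α * c1 x k))

/-- Miura map `M₁⁽⁺⁾(α;ε) : ℳℛ𝒯 → ℛ𝒯`: `b_k = p_k + εq_{k-1} + εαp_k q_{k-1}`,
`a_k = q_k(1+εp_k)(1+εαq_{k-1})`. -/
noncomputable def miuraMR1 (α ε : ℝ) {N : ℕ} (x : Phase N) : Phase N := fun i =>
  match i with
  | Sum.inl k => c1 x k + ε * c2 x (k - 1) + ε * α * c1 x k * c2 x (k - 1)
  | Sum.inr k => c2 x k * (1 + ε * c1 x k) * (1 + ε * α * c2 x (k - 1))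

/-- Miura map `M₂⁽⁺⁾(α;ε) : ℳℛ𝒯 → ℛ𝒯`: `b_k = p_k + εq_k + εαp_k q_k`,
`a_k = q_k(1+εp_{k+1})(1+εαq_{k+1})`. -/
noncomputable def miuraMR2 (α ε : ℝ) {N : ℕ} (x : Phase N) : Phase N := fun i =>
  match i with
  | Sum.inl k => c1 x k + ε * c2 x k + ε * α * c1 x k * c2 x k
  | Sum.inr k => c2 x k * (1 + ε * c1 x (k + 1)) * (1 + ε * α * c2 x (k + 1))

/-!
A structure matrix is skew, so the Poisson property has to be checked only for the brackets
`{b_k, b_l}`, `{b_k, a_l}` and `{a_k, a_l}`. All brackets are local: both sides vanish unless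
`|k - l| ≤ 2`, and since `N ≥ 5` the five remaining values of `k - l` are distinct in `ℤ/Nℤ`, so
each case is a single rational identity. The reflection `p_k ↔ p_{-k}`, `q_k ↔ q_{-k-1}` of the
lattice exchanges `M₁` and `M₂` while changing the sign of every bracket and of every flow, which
reduces the claims about `M₂` to those about `M₁`.
-/

variable {N : ℕ}

section Coordinates
variable [NeZero N]

theorem sum_pderiv_mul {F : Phase N → ℝ} {F' : Phase N →L[ℝ] ℝ} {x : Phase N}
    (hF : HasFDerivAt F F' x) (v : Phase N) : ∑ i, pderiv i F x * v i = F' v := by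
  calc ∑ i, pderiv i F x * v i = F' (∑ i, v i • Pi.single i 1) := by
        simp [pderiv, hF.fderiv, mul_comm]
    _ = F' v := by rw [← pi_eq_sum_univ' v]

theorem apply_apply_eq_neg_of_skew (A B : Phase N →L[ℝ] ℝ) {J : Idx N → Idx N → ℝ}
    (hJ : ∀ i j, J i j = -J j i) : A (fun k => B (J k)) = -B (fun k => A (J k)) := by
  have hcoord (F : Phase N →L[ℝ] ℝ) (v : Phase N) : F v = ∑ i, pderiv i F 0 * v i :=
    (sum_pderiv_mul F.hasFDerivAt v).symm
  simp only [hcoord A, hcoord B, Finset.mul_sum]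
  rw [Finset.sum_comm, ← Finset.sum_neg_distrib]
  refine Finset.sum_congr rfl fun l _ => ?_
  rw [← Finset.sum_neg_distrib]
  refine Finset.sum_congr rfl fun k _ => ?_
  rw [hJ k l]
  ring

theorem pderiv_comp_perm (e : Equiv.Perm (Idx N)) (F : Phase N → ℝ) (x : Phase N) (k : Idx N) :
    pderiv (e k) (fun y => F (y ∘ e)) x = pderiv k F (x ∘ e) := by
  let L : Phase N ≃L[ℝ] Phase N := (LinearEquiv.funCongrLeft ℝ ℝ e).toContinuousLinearEquiv
  have hL : L (Pi.single (e k) 1) = Pi.single k 1 := by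
    funext i
    simp [L, LinearEquiv.funCongrLeft_apply, LinearMap.funLeft_apply, Pi.single_apply]
  have hderiv : fderiv ℝ (F ∘ L) x = (fderiv ℝ F (L x)).comp (L : Phase N →L[ℝ] Phase N) :=
    L.comp_right_fderiv
  calc fderiv ℝ (F ∘ L) x (Pi.single (e k) 1) = fderiv ℝ F (L x) (L (Pi.single (e k) 1)) := by
        rw [hderiv]; rfl
    _ = pderiv k F (x ∘ e) := by rw [hL]; rfl

variable {φ f g : Phase N → Phase N} {J J' : SM N} {x : Phase N}

theorem PullbackAt.conj_perm (e : Equiv.Perm (Idx N))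
    (hf : ∀ y i, f (y ∘ e) i = -f y (e i)) (hg : ∀ y i, g (y ∘ e) i = -g y (e i))
    (h : PullbackAt φ f g (x ∘ e)) : PullbackAt (fun y => φ (y ∘ e) ∘ e) f g x := by
  intro i
  calc ∑ k, pderiv k (fun y => φ (y ∘ e) (e i)) x * f x k
      = ∑ k, pderiv (e k) (fun y => φ (y ∘ e) (e i)) x * f x (e k) := (Equiv.sum_comp e _).symm
    _ = -∑ k, pderiv k (fun y => φ y (e i)) (x ∘ e) * f (x ∘ e) k := by
        rw [← Finset.sum_neg_distrib]
        refine Finset.sum_congr rfl fun k _ => ?_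
        rw [pderiv_comp_perm e (fun y => φ y (e i)), hf, mul_neg, neg_neg]
    _ = g (φ (x ∘ e) ∘ e) i := by rw [h (e i), hg]

theorem PoissonMapAt.conj_perm (e : Equiv.Perm (Idx N))
    (hJ : ∀ y i j, J (y ∘ e) i j = J y (e j) (e i))
    (hJ' : ∀ y i j, J' (y ∘ e) i j = J' y (e j) (e i))
    (h : PoissonMapAt φ J J' (x ∘ e)) : PoissonMapAt (fun y => φ (y ∘ e) ∘ e) J J' x := by
  intro i j
  let D (i k : Idx N) : ℝ := pderiv k (fun y => φ y i) (x ∘ e)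
  have hD (i k : Idx N) : pderiv (e k) (fun y => φ (y ∘ e) i) x = D i k :=
    pderiv_comp_perm e (fun y => φ y i) x k
  calc ∑ k, ∑ l, pderiv k (fun y => φ (y ∘ e) (e i)) x * J x k l *
        pderiv l (fun y => φ (y ∘ e) (e j)) x
      = ∑ k, ∑ l, D (e i) k * J x (e k) (e l) * D (e j) l := by
        rw [← Equiv.sum_comp e]
        refine Finset.sum_congr rfl fun k _ => ?_
        rw [← Equiv.sum_comp e]
        simp only [hD]
    _ = ∑ l, ∑ k, D (e j) l * J (x ∘ e) l k * D (e i) k := by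
        rw [Finset.sum_comm]
        refine Finset.sum_congr rfl fun l _ => Finset.sum_congr rfl fun k _ => ?_
        rw [hJ]
        ring
    _ = J' (φ (x ∘ e) ∘ e) i j := by rw [hJ', ← h (e j) (e i)]

variable {D : Idx N → Phase N →L[ℝ] ℝ}

theorem pullbackAt_iff (hφ : ∀ i, HasFDerivAt (fun y => φ y i) (D i) x) :
    PullbackAt φ f g x ↔ ∀ i, D i (f x) = g (φ x) i :=
  forall_congr' fun i => by rw [sum_pderiv_mul (hφ i)]

theorem poissonMapAt_iff (hφ : ∀ i, HasFDerivAt (fun y => φ y i) (D i) x) :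
    PoissonMapAt φ J J' x ↔ ∀ i j, D i (fun k => D j (J x k)) = J' (φ x) i j := by
  refine forall₂_congr fun i j => ?_
  have hsum : ∑ k, ∑ l, pderiv k (fun y => φ y i) x * J x k l * pderiv l (fun y => φ y j) x =
      D i (fun k => D j (J x k)) := by
    rw [← sum_pderiv_mul (hφ i)]
    refine Finset.sum_congr rfl fun k _ => ?_
    rw [← sum_pderiv_mul (hφ j), Finset.mul_sum]
    exact Finset.sum_congr rfl fun l _ => by ring
  rw [hsum]

theorem poissonMapAt_of_skew (hφ : ∀ i, HasFDerivAt (fun y => φ y i) (D i) x)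
    (hJ : ∀ i j, J x i j = -J x j i) (hJ' : ∀ i j, J' (φ x) i j = -J' (φ x) j i)
    (hbb : ∀ k l, D (.inl k) (fun i => D (.inl l) (J x i)) = J' (φ x) (.inl k) (.inl l))
    (hba : ∀ k l, D (.inl k) (fun i => D (.inr l) (J x i)) = J' (φ x) (.inl k) (.inr l))
    (haa : ∀ k l, D (.inr k) (fun i => D (.inr l) (J x i)) = J' (φ x) (.inr k) (.inr l)) :
    PoissonMapAt φ J J' x := by
  rw [poissonMapAt_iff hφ]
  rintro (k | k) (l | l)
  · exact hbb k l
  · exact hba k l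
  · rw [apply_apply_eq_neg_of_skew _ _ hJ, hba, ← hJ']
  · exact haa k l

end Coordinates

theorem natCast_ne_zero_of_lt {n : ℕ} (h0 : n ≠ 0) (hn : n < N) : (n : ZMod N) ≠ 0 := by
  rw [Ne, ZMod.natCast_eq_zero_iff]
  exact Nat.not_dvd_of_pos_of_lt (Nat.pos_of_ne_zero h0) hn

/-- The lattice reflection `p_k ↔ p_{-k}`, `q_k ↔ q_{-k-1}`, which turns `M₁` into `M₂`. -/
def reflect (N : ℕ) : Equiv.Perm (Idx N) :=
  (Equiv.neg _).sumCongr ((Equiv.neg _).trans (Equiv.subRight 1))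

theorem reflect_inl (k : ZMod N) : reflect N (.inl k) = .inl (-k) := rfl

theorem reflect_inr (k : ZMod N) : reflect N (.inr k) = .inr (-k - 1) := rfl

theorem c1_comp_reflect (x : Phase N) (k : ZMod N) : c1 (x ∘ reflect N) k = c1 x (-k) := rfl

theorem c2_comp_reflect (x : Phase N) (k : ZMod N) : c2 (x ∘ reflect N) k = c2 x (-k - 1) := rfl

theorem miuraMR2_eq_conj_reflect (α ε : ℝ) :
    miuraMR2 α ε = fun y : Phase N => miuraMR1 α ε (y ∘ reflect N) ∘ reflect N := by
  funext y i
  obtain (k | k) := i <;>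
    simp only [miuraMR1, miuraMR2, Function.comp_apply, reflect_inl, reflect_inr, c1_comp_reflect,
      c2_comp_reflect] <;>
    ring_nf

theorem rtlP_comp_reflect (α : ℝ) (x : Phase N) (i : Idx N) :
    rtlP α (x ∘ reflect N) i = -rtlP α x (reflect N i) := by
  obtain (k | k) := i <;>
    simp only [rtlP, reflect_inl, reflect_inr, c1_comp_reflect, c2_comp_reflect] <;>
    ring_nf

theorem rtlM_comp_reflect (α : ℝ) (x : Phase N) (i : Idx N) :
    rtlM α (x ∘ reflect N) i = -rtlM α x (reflect N i) := by
  obtain (k | k) := i <;>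
    simp only [rtlM, reflect_inl, reflect_inr, c1_comp_reflect, c2_comp_reflect] <;>
    ring_nf

theorem mrtlPp_comp_reflect (α ε : ℝ) (x : Phase N) (i : Idx N) :
    mrtlPp α ε (x ∘ reflect N) i = -mrtlPp α ε x (reflect N i) := by
  obtain (k | k) := i <;>
    simp only [mrtlPp, reflect_inl, reflect_inr, c1_comp_reflect, c2_comp_reflect] <;>
    ring_nf

theorem mrtlPm_comp_reflect (α ε : ℝ) (x : Phase N) (i : Idx N) :
    mrtlPm α ε (x ∘ reflect N) i = -mrtlPm α ε x (reflect N i) := by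
  obtain (k | k) := i <;>
    simp only [mrtlPm, reflect_inl, reflect_inr, c1_comp_reflect, c2_comp_reflect] <;>
    ring_nf

theorem JT2_comp_reflect (hN : 2 ≤ N) (x : Phase N) (i j : Idx N) :
    JT2 (x ∘ reflect N) i j = JT2 x (reflect N j) (reflect N i) := by
  have h1 : (1 : ZMod N) ≠ 0 := by exact_mod_cast natCast_ne_zero_of_lt one_ne_zero (by lia)
  obtain (i | i) := i <;> obtain (j | j) := j <;>
    simp only [JT2, reflect_inl, reflect_inr, c1_comp_reflect, c2_comp_reflect] <;>
    grind [neg_add', sub_add_cancel, sub_sub]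

theorem JR1_comp_reflect (hN : 2 ≤ N) (α : ℝ) (x : Phase N) (i j : Idx N) :
    JR1 α (x ∘ reflect N) i j = JR1 α x (reflect N j) (reflect N i) := by
  have h1 : (1 : ZMod N) ≠ 0 := by exact_mod_cast natCast_ne_zero_of_lt one_ne_zero (by lia)
  obtain (i | i) := i <;> obtain (j | j) := j <;>
    simp only [JR1, reflect_inl, reflect_inr, c2_comp_reflect] <;>
    grind [neg_add', sub_add_cancel, sub_sub]

theorem JR3_comp_reflect (hN : 4 ≤ N) (α : ℝ) (x : Phase N) (i j : Idx N) :
    JR3 α (x ∘ reflect N) i j = JR3 α x (reflect N j) (reflect N i) := by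
  have h3 : (3 : ZMod N) ≠ 0 := by exact_mod_cast natCast_ne_zero_of_lt three_ne_zero (by lia)
  obtain (i | i) := i <;> obtain (j | j) := j <;>
    simp only [JR3, reflect_inl, reflect_inr, c1_comp_reflect, c2_comp_reflect] <;>
    grind [neg_add', sub_add_cancel, sub_sub, one_add_one_eq_two]

theorem JMR12_comp_reflect (hN : 2 ≤ N) (α ε : ℝ) (x : Phase N) (i j : Idx N) :
    JMR12 α ε (x ∘ reflect N) i j = JMR12 α ε x (reflect N j) (reflect N i) := by
  have h1 : (1 : ZMod N) ≠ 0 := by exact_mod_cast natCast_ne_zero_of_lt one_ne_zero (by lia)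
  obtain (i | i) := i <;> obtain (j | j) := j <;>
    simp only [JMR12, reflect_inl, reflect_inr, c1_comp_reflect, c2_comp_reflect] <;>
    grind [neg_add', sub_add_cancel, sub_sub]

theorem JMR23_comp_reflect (hN : 2 ≤ N) (α ε : ℝ) (x : Phase N) (i j : Idx N) :
    JMR23 α ε (x ∘ reflect N) i j = JMR23 α ε x (reflect N j) (reflect N i) := by
  have h1 : (1 : ZMod N) ≠ 0 := by exact_mod_cast natCast_ne_zero_of_lt one_ne_zero (by lia)
  obtain (i | i) := i <;> obtain (j | j) := j <;>
    simp only [JMR23, reflect_inl, reflect_inr, c1_comp_reflect, c2_comp_reflect] <;>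
    grind [neg_add', sub_add_cancel, sub_sub]

/-- Coordinate functional `x ↦ x i` on the phase space. -/
abbrev coord (i : Idx N) : Phase N →L[ℝ] ℝ := ContinuousLinearMap.proj i

/-- The differential of `M₁` at `x`, componentwise: `miuraMR1Deriv α ε x i` is `d(M₁)ᵢ`. -/
noncomputable def miuraMR1Deriv (α ε : ℝ) (x : Phase N) : Idx N → Phase N →L[ℝ] ℝ
  | Sum.inl k => (1 + ε * α * c2 x (k - 1)) • coord (Sum.inl k) +
      (ε * (1 + α * c1 x k)) • coord (Sum.inr (k - 1))
  | Sum.inr k => ((1 + ε * α * c2 x (k - 1)) * (ε * c2 x k)) • coord (Sum.inl k) +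
      ((1 + ε * α * c2 x (k - 1)) * (1 + ε * c1 x k)) • coord (Sum.inr k) +
      (ε * α * (c2 x k * (1 + ε * c1 x k))) • coord (Sum.inr (k - 1))

theorem hasFDerivAt_miuraMR1 [NeZero N] (α ε : ℝ) (x : Phase N) (i : Idx N) :
    HasFDerivAt (fun y => miuraMR1 α ε y i) (miuraMR1Deriv α ε x i) x := by
  have hc (i : Idx N) : HasFDerivAt (fun y : Phase N => y i) (coord i) x := (coord i).hasFDerivAt
  obtain (k | k) := i
  · have hb := ((hc (.inl k)).add ((hc (.inr (k - 1))).const_mul ε)).add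
      (((hc (.inl k)).const_mul (ε * α)).mul (hc (.inr (k - 1))))
    refine hb.congr_fderiv (ContinuousLinearMap.ext fun v => ?_)
    simp only [miuraMR1Deriv, _root_.add_apply, _root_.smul_apply, ContinuousLinearMap.proj_apply,
      smul_eq_mul, c1, c2]
    ring
  · have ha := ((hc (.inr k)).mul (((hc (.inl k)).const_mul ε).const_add 1)).mul
      (((hc (.inr (k - 1))).const_mul (ε * α)).const_add 1)
    refine ha.congr_fderiv (ContinuousLinearMap.ext fun v => ?_)
    simp only [miuraMR1Deriv, _root_.add_apply, _root_.smul_apply, ContinuousLinearMap.proj_apply,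
      Pi.mul_apply, smul_eq_mul, c1, c2]
    ring

theorem miuraMR1Deriv_inl_apply (α ε : ℝ) (x v : Phase N) (k : ZMod N) :
    miuraMR1Deriv α ε x (.inl k) v =
      (1 + ε * α * c2 x (k - 1)) * v (.inl k) + ε * (1 + α * c1 x k) * v (.inr (k - 1)) := rfl

theorem miuraMR1Deriv_inr_apply (α ε : ℝ) (x v : Phase N) (k : ZMod N) :
    miuraMR1Deriv α ε x (.inr k) v =
      (1 + ε * α * c2 x (k - 1)) * (ε * c2 x k) * v (.inl k) +
        (1 + ε * α * c2 x (k - 1)) * (1 + ε * c1 x k) * v (.inr k) +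
        ε * α * (c2 x k * (1 + ε * c1 x k)) * v (.inr (k - 1)) := rfl

theorem c1_miuraMR1 (α ε : ℝ) (x : Phase N) (k : ZMod N) : c1 (miuraMR1 α ε x) k =
    c1 x k + ε * c2 x (k - 1) + ε * α * c1 x k * c2 x (k - 1) := rfl

theorem c2_miuraMR1 (α ε : ℝ) (x : Phase N) (k : ZMod N) : c2 (miuraMR1 α ε x) k =
    c2 x k * (1 + ε * c1 x k) * (1 + ε * α * c2 x (k - 1)) := rfl

theorem one_add_mul_c1_miuraMR1 (α ε : ℝ) (x : Phase N) (k : ZMod N) :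
    1 + α * c1 (miuraMR1 α ε x) k = (1 + ε * α * c2 x (k - 1)) * (1 + α * c1 x k) := by
  rw [c1_miuraMR1]
  ring

section Pullback
variable [NeZero N] {α ε : ℝ} {x : Phase N}

theorem pullbackAt_miuraMR1_rtlP : PullbackAt (miuraMR1 α ε) (mrtlPp α ε) (rtlP α) x := by
  rw [pullbackAt_iff (hasFDerivAt_miuraMR1 α ε x)]
  rintro (k | k)
  · simp only [miuraMR1Deriv_inl_apply, mrtlPp, rtlP, c1_miuraMR1, c2_miuraMR1, sub_add_cancel]
    ring
  · simp only [miuraMR1Deriv_inr_apply, mrtlPp, rtlP, c1_miuraMR1, c2_miuraMR1, sub_add_cancel,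
      add_sub_cancel_right]
    ring

theorem pullbackAt_miuraMR1_rtlM (hq : ∀ k, 1 + ε * α * c2 x k ≠ 0)
    (hp : ∀ k, 1 + α * c1 x k ≠ 0) :
    PullbackAt (miuraMR1 α ε) (mrtlPm α ε) (rtlM α) x := by
  rw [pullbackAt_iff (hasFDerivAt_miuraMR1 α ε x)]
  rintro (k | k)
  · simp only [miuraMR1Deriv_inl_apply, mrtlPm, rtlM, one_add_mul_c1_miuraMR1, c2_miuraMR1,
      sub_add_cancel, add_sub_cancel_right]
    field_simp [hq, hp]
    ring
  · simp only [miuraMR1Deriv_inr_apply, mrtlPm, rtlM, one_add_mul_c1_miuraMR1, c2_miuraMR1,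
      sub_add_cancel, add_sub_cancel_right]
    simp only [c1_miuraMR1, add_sub_cancel_right]
    field_simp [hq, hp]
    ring

theorem pullbackAt_miuraMR2_rtlP : PullbackAt (miuraMR2 α ε) (mrtlPp α ε) (rtlP α) x := by
  rw [miuraMR2_eq_conj_reflect]
  exact pullbackAt_miuraMR1_rtlP.conj_perm (reflect N) (mrtlPp_comp_reflect α ε)
    (rtlP_comp_reflect α)

theorem pullbackAt_miuraMR2_rtlM (hq : ∀ k, 1 + ε * α * c2 x k ≠ 0)
    (hp : ∀ k, 1 + α * c1 x k ≠ 0) :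
    PullbackAt (miuraMR2 α ε) (mrtlPm α ε) (rtlM α) x := by
  rw [miuraMR2_eq_conj_reflect]
  exact (pullbackAt_miuraMR1_rtlM (fun k => hq (-k - 1)) fun k => hp (-k)).conj_perm (reflect N)
    (mrtlPm_comp_reflect α ε) (rtlM_comp_reflect α)

end Pullback

theorem add_ones_ne (hN : 5 ≤ N) (k : ZMod N) :
    k + 1 ≠ k ∧ k + 1 + 1 ≠ k ∧ k + 1 + 1 + 1 ≠ k ∧ k + 1 + 1 + 1 + 1 ≠ k := by
  have hne {n : ℕ} (h0 : n ≠ 0) (hn : n < 5) : k + n ≠ k :=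
    fun h => natCast_ne_zero_of_lt h0 (hn.trans_le hN) (add_eq_left.mp h)
  refine ⟨?_, ?_, ?_, ?_⟩
  · simpa using hne one_ne_zero (by norm_num)
  · simpa [add_assoc, one_add_one_eq_two] using hne two_ne_zero (by norm_num)
  · convert hne three_ne_zero (by norm_num) using 1; push_cast; ring
  · convert hne four_ne_zero (by norm_num) using 1; push_cast; ring

theorem ne_add_ones (hN : 5 ≤ N) (k : ZMod N) :
    k ≠ k + 1 ∧ k ≠ k + 1 + 1 ∧ k ≠ k + 1 + 1 + 1 ∧ k ≠ k + 1 + 1 + 1 + 1 := by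
  simpa only [ne_comm] using add_ones_ne hN k

/-- The sites `k` and `l` are at cyclic distance more than two, so that all brackets between the
coordinates at `k` and those at `l` vanish. -/
def Far (k l : ZMod N) : Prop :=
  k ≠ l ∧ k ≠ l + 1 ∧ k ≠ l + 1 + 1 ∧ k + 1 ≠ l ∧ k + 1 + 1 ≠ l

theorem Far.symm {k l : ZMod N} : Far k l → Far l k := fun ⟨h0, h1, h2, h1', h2'⟩ =>
  ⟨h0.symm, h1'.symm, h2'.symm, h1.symm, h2.symm⟩

theorem shift_cases {P : ZMod N → ZMod N → Prop}
    (zero : ∀ k, P (k + 1) (k + 1))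
    (one : ∀ k, P (k + 1) (k + 1 + 1))
    (two : ∀ k, P (k + 1) (k + 1 + 1 + 1))
    (neg_one : ∀ k, P (k + 1 + 1) (k + 1))
    (neg_two : ∀ k, P (k + 1 + 1 + 1) (k + 1))
    (far : ∀ k l, Far k l → P (k + 1) (l + 1)) (k l : ZMod N) : P k l := by
  obtain ⟨k, rfl⟩ : ∃ k', k = k' + 1 := ⟨k - 1, by ring⟩
  obtain ⟨l, rfl⟩ : ∃ l', l = l' + 1 := ⟨l - 1, by ring⟩
  rcases eq_or_ne k l with rfl | h0
  · exact zero k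
  rcases eq_or_ne k (l + 1) with rfl | h1
  · exact neg_one l
  rcases eq_or_ne k (l + 1 + 1) with rfl | h2
  · exact neg_two l
  rcases eq_or_ne (k + 1) l with rfl | h1'
  · exact one k
  rcases eq_or_ne (k + 1 + 1) l with rfl | h2'
  · exact two k
  exact far k l ⟨h0, h1, h2, h1', h2'⟩

theorem JT2_skew (hN : 3 ≤ N) (x : Phase N) (i j : Idx N) :
    JT2 x i j = -JT2 x j i := by
  have h2 : (2 : ZMod N) ≠ 0 := by exact_mod_cast natCast_ne_zero_of_lt two_ne_zero (by lia)
  obtain (i | i) := i <;> obtain (j | j) := j <;> simp only [JT2] <;> grind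

theorem JR1_skew (hN : 3 ≤ N) (α : ℝ) (x : Phase N) (i j : Idx N) :
    JR1 α x i j = -JR1 α x j i := by
  have h2 : (2 : ZMod N) ≠ 0 := by exact_mod_cast natCast_ne_zero_of_lt two_ne_zero (by lia)
  obtain (i | i) := i <;> obtain (j | j) := j <;> simp only [JR1] <;> grind

theorem JR3_skew (hN : 5 ≤ N) (α : ℝ) (x : Phase N) (i j : Idx N) :
    JR3 α x i j = -JR3 α x j i := by
  have h3 : (3 : ZMod N) ≠ 0 := by exact_mod_cast natCast_ne_zero_of_lt three_ne_zero (by lia)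
  have h4 : (4 : ZMod N) ≠ 0 := by exact_mod_cast natCast_ne_zero_of_lt four_ne_zero (by lia)
  obtain (i | i) := i <;> obtain (j | j) := j <;> simp only [JR3] <;> grind

theorem JMR12_skew (hN : 3 ≤ N) (α ε : ℝ) (x : Phase N) (i j : Idx N) :
    JMR12 α ε x i j = -JMR12 α ε x j i := by
  have h2 : (2 : ZMod N) ≠ 0 := by exact_mod_cast natCast_ne_zero_of_lt two_ne_zero (by lia)
  obtain (i | i) := i <;> obtain (j | j) := j <;> simp only [JMR12] <;> grind

theorem JMR23_skew (hN : 3 ≤ N) (α ε : ℝ) (x : Phase N) (i j : Idx N) :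
    JMR23 α ε x i j = -JMR23 α ε x j i := by
  have h2 : (2 : ZMod N) ≠ 0 := by exact_mod_cast natCast_ne_zero_of_lt two_ne_zero (by lia)
  obtain (i | i) := i <;> obtain (j | j) := j <;> simp only [JMR23] <;> grind

section Poisson
variable {α ε : ℝ} {x : Phase N}

theorem miuraMR1Deriv_JMR12_inl_inl (hN : 5 ≤ N) (hx : ∀ k, 1 + ε * α * c2 x k ≠ 0)
    (k l : ZMod N) :
    miuraMR1Deriv α ε x (.inl k) (fun i => miuraMR1Deriv α ε x (.inl l) (JMR12 α ε x i)) =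
      JR1 α (miuraMR1 α ε x) (.inl k) (.inl l) +
        ε * JT2 (miuraMR1 α ε x) (.inl k) (.inl l) := by
  have hne := add_ones_ne hN
  have hne' := ne_add_ones hN
  induction k, l using shift_cases
  case far k l h =>
    have h' := h.symm
    simp only [Far] at h h'
    simp only [miuraMR1Deriv_inl_apply, JMR12, JR1, JT2,
      add_sub_cancel_right, add_left_inj, h, h', if_false, mul_zero, add_zero]
  all_goals
    simp only [miuraMR1Deriv_inl_apply, JMR12, JR1, JT2, c2_miuraMR1,
      add_sub_cancel_right, hne, hne', if_true, if_false]
  case one | neg_one => field_simp [hx]; ring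
  all_goals ring

theorem miuraMR1Deriv_JMR12_inl_inr (hN : 5 ≤ N) (hx : ∀ k, 1 + ε * α * c2 x k ≠ 0)
    (k l : ZMod N) :
    miuraMR1Deriv α ε x (.inl k) (fun i => miuraMR1Deriv α ε x (.inr l) (JMR12 α ε x i)) =
      JR1 α (miuraMR1 α ε x) (.inl k) (.inr l) +
        ε * JT2 (miuraMR1 α ε x) (.inl k) (.inr l) := by
  have hne := add_ones_ne hN
  have hne' := ne_add_ones hN
  induction k, l using shift_cases
  case far k l h =>
    have h' := h.symm
    simp only [Far] at h h'
    simp only [miuraMR1Deriv_inl_apply, miuraMR1Deriv_inr_apply, JMR12, JR1, JT2,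
      add_sub_cancel_right, add_left_inj, h, h', if_false, mul_zero, add_zero]
  all_goals
    simp only [miuraMR1Deriv_inl_apply, miuraMR1Deriv_inr_apply, JMR12, JR1, JT2, c1_miuraMR1,
      c2_miuraMR1, add_sub_cancel_right, hne, hne', if_true, if_false]
  case one | neg_one => field_simp [hx]; ring
  all_goals ring

theorem miuraMR1Deriv_JMR12_inr_inr (hN : 5 ≤ N) (hx : ∀ k, 1 + ε * α * c2 x k ≠ 0)
    (k l : ZMod N) :
    miuraMR1Deriv α ε x (.inr k) (fun i => miuraMR1Deriv α ε x (.inr l) (JMR12 α ε x i)) =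
      JR1 α (miuraMR1 α ε x) (.inr k) (.inr l) +
        ε * JT2 (miuraMR1 α ε x) (.inr k) (.inr l) := by
  have hne := add_ones_ne hN
  have hne' := ne_add_ones hN
  induction k, l using shift_cases
  case far k l h =>
    have h' := h.symm
    simp only [Far] at h h'
    simp only [miuraMR1Deriv_inr_apply, JMR12, JR1, JT2,
      add_sub_cancel_right, add_left_inj, h, h', if_false, mul_zero, add_zero]
  all_goals
    simp only [miuraMR1Deriv_inr_apply, JMR12, JR1, JT2, c2_miuraMR1,
      add_sub_cancel_right, hne, hne', if_true, if_false]
  case one | neg_one => field_simp [hx]; ring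
  all_goals ring

theorem miuraMR1Deriv_JMR23_inl_inl (hN : 5 ≤ N) (hx : ∀ k, 1 + ε * α * c2 x k ≠ 0)
    (k l : ZMod N) :
    miuraMR1Deriv α ε x (.inl k) (fun i => miuraMR1Deriv α ε x (.inl l) (JMR23 α ε x i)) =
      JT2 (miuraMR1 α ε x) (.inl k) (.inl l) +
        ε * JR3 α (miuraMR1 α ε x) (.inl k) (.inl l) := by
  have hne := add_ones_ne hN
  have hne' := ne_add_ones hN
  induction k, l using shift_cases
  case far k l h =>
    have h' := h.symm
    simp only [Far] at h h'
    simp only [miuraMR1Deriv_inl_apply, JMR23, JT2, JR3,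
      add_sub_cancel_right, add_left_inj, h, h', if_false, mul_zero, add_zero]
  all_goals
    simp only [miuraMR1Deriv_inl_apply, JMR23, JT2, JR3, c1_miuraMR1, c2_miuraMR1,
      add_sub_cancel_right, hne, hne', if_true, if_false]
  case one | neg_one => field_simp [hx]; ring
  all_goals ring

theorem miuraMR1Deriv_JMR23_inl_inr (hN : 5 ≤ N) (hx : ∀ k, 1 + ε * α * c2 x k ≠ 0)
    (k l : ZMod N) :
    miuraMR1Deriv α ε x (.inl k) (fun i => miuraMR1Deriv α ε x (.inr l) (JMR23 α ε x i)) =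
      JT2 (miuraMR1 α ε x) (.inl k) (.inr l) +
        ε * JR3 α (miuraMR1 α ε x) (.inl k) (.inr l) := by
  have hne := add_ones_ne hN
  have hne' := ne_add_ones hN
  have hadd (m : ZMod N) : m + 2 = m + 1 + 1 := by ring
  induction k, l using shift_cases
  case far k l h =>
    have h' := h.symm
    simp only [Far] at h h'
    simp only [miuraMR1Deriv_inl_apply, miuraMR1Deriv_inr_apply, JMR23, JT2, JR3,
      add_sub_cancel_right, add_left_inj, h, h', hadd, if_false, mul_zero, add_zero]
  all_goals
    simp only [miuraMR1Deriv_inl_apply, miuraMR1Deriv_inr_apply, JMR23, JT2, JR3, c1_miuraMR1,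
      c2_miuraMR1, add_sub_cancel_right, hne, hne', hadd, if_true, if_false]
  case one | neg_one => field_simp [hx]; ring
  all_goals ring

theorem miuraMR1Deriv_JMR23_inr_inr (hN : 5 ≤ N) (hx : ∀ k, 1 + ε * α * c2 x k ≠ 0)
    (k l : ZMod N) :
    miuraMR1Deriv α ε x (.inr k) (fun i => miuraMR1Deriv α ε x (.inr l) (JMR23 α ε x i)) =
      JT2 (miuraMR1 α ε x) (.inr k) (.inr l) +
        ε * JR3 α (miuraMR1 α ε x) (.inr k) (.inr l) := by
  have hne := add_ones_ne hN
  have hne' := ne_add_ones hN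
  have hadd (m : ZMod N) : m + 2 = m + 1 + 1 := by ring
  induction k, l using shift_cases
  case far k l h =>
    have h' := h.symm
    simp only [Far] at h h'
    simp only [miuraMR1Deriv_inr_apply, JMR23, JT2, JR3,
      add_sub_cancel_right, add_left_inj, h, h', hadd, if_false, mul_zero, add_zero]
  all_goals
    simp only [miuraMR1Deriv_inr_apply, JMR23, JT2, JR3, c1_miuraMR1, c2_miuraMR1,
      add_sub_cancel_right, hne, hne', hadd, if_true, if_false]
  case one | neg_one => field_simp [hx]; ring
  all_goals ring

variable [NeZero N]

theorem poissonMapAt_miuraMR1_JMR12 (hN : 5 ≤ N) (hx : ∀ k, 1 + ε * α * c2 x k ≠ 0) :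
    PoissonMapAt (miuraMR1 α ε) (JMR12 α ε) (fun y i j => JR1 α y i j + ε * JT2 y i j) x :=
  poissonMapAt_of_skew (hasFDerivAt_miuraMR1 α ε x) (JMR12_skew (by lia) α ε x)
    (fun i j => by linear_combination JR1_skew (by lia) α _ i j + ε * JT2_skew (by lia) _ i j)
    (miuraMR1Deriv_JMR12_inl_inl hN hx) (miuraMR1Deriv_JMR12_inl_inr hN hx)
    (miuraMR1Deriv_JMR12_inr_inr hN hx)

theorem poissonMapAt_miuraMR2_JMR12 (hN : 5 ≤ N) (hx : ∀ k, 1 + ε * α * c2 x k ≠ 0) :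
    PoissonMapAt (miuraMR2 α ε) (JMR12 α ε) (fun y i j => JR1 α y i j + ε * JT2 y i j) x := by
  rw [miuraMR2_eq_conj_reflect]
  refine (poissonMapAt_miuraMR1_JMR12 hN fun k => hx (-k - 1)).conj_perm (reflect N)
    (JMR12_comp_reflect (by lia) α ε) fun y i j => ?_
  rw [JR1_comp_reflect (by lia), JT2_comp_reflect (by lia)]

theorem poissonMapAt_miuraMR1_JMR23 (hN : 5 ≤ N) (hx : ∀ k, 1 + ε * α * c2 x k ≠ 0) :
    PoissonMapAt (miuraMR1 α ε) (JMR23 α ε) (fun y i j => JT2 y i j + ε * JR3 α y i j) x :=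
  poissonMapAt_of_skew (hasFDerivAt_miuraMR1 α ε x) (JMR23_skew (by lia) α ε x)
    (fun i j => by linear_combination JT2_skew (by lia) _ i j + ε * JR3_skew hN α _ i j)
    (miuraMR1Deriv_JMR23_inl_inl hN hx) (miuraMR1Deriv_JMR23_inl_inr hN hx)
    (miuraMR1Deriv_JMR23_inr_inr hN hx)

theorem poissonMapAt_miuraMR2_JMR23 (hN : 5 ≤ N) (hx : ∀ k, 1 + ε * α * c2 x k ≠ 0) :
    PoissonMapAt (miuraMR2 α ε) (JMR23 α ε) (fun y i j => JT2 y i j + ε * JR3 α y i j) x := by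
  rw [miuraMR2_eq_conj_reflect]
  refine (poissonMapAt_miuraMR1_JMR23 hN fun k => hx (-k - 1)).conj_perm (reflect N)
    (JMR23_comp_reflect (by lia) α ε) fun y i j => ?_
  rw [JT2_comp_reflect (by lia), JR3_comp_reflect (by lia)]

end Poisson

/-- the Miura maps `M₁⁽⁺⁾(α;ε), M₂⁽⁺⁾(α;ε) : ℳℛ𝒯 → ℛ𝒯` are Poisson
from `{·,·}_{12α}` to `{·,·}_{1α} + ε{·,·}_{2α}` and from `{·,·}_{23α}` to
`{·,·}_{2α} + ε{·,·}_{3α}` (where all `1 + εαq_k ≠ 0`); the pull-back of `RTL₊(α)`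
under them is `MRTL₊⁽⁺⁾(α;ε)`, and where in addition all RTL₋/MRTL₋ denominators
are nonzero, the pull-back of `RTL₋(α)` is `MRTL₋⁽⁺⁾(α;ε)`. -/
theorem stmt18 (N : ℕ) [NeZero N] (hN : 5 ≤ N) (α ε : ℝ) :
    (∀ x : Phase N, (∀ k : ZMod N, 1 + ε * α * c2 x k ≠ 0) →
      PoissonMapAt (miuraMR1 α ε) (JMR12 α ε)
        (fun y i j => JR1 α y i j + ε * JT2 y i j) x ∧
      PoissonMapAt (miuraMR2 α ε) (JMR12 α ε)
        (fun y i j => JR1 α y i j + ε * JT2 y i j) x ∧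
      PoissonMapAt (miuraMR1 α ε) (JMR23 α ε)
        (fun y i j => JT2 y i j + ε * JR3 α y i j) x ∧
      PoissonMapAt (miuraMR2 α ε) (JMR23 α ε)
        (fun y i j => JT2 y i j + ε * JR3 α y i j) x) ∧
    (∀ x : Phase N, PullbackAt (miuraMR1 α ε) (mrtlPp α ε) (rtlP α) x) ∧
    (∀ x : Phase N, PullbackAt (miuraMR2 α ε) (mrtlPp α ε) (rtlP α) x) ∧
    (∀ x : Phase N,
      (∀ k : ZMod N, 1 + ε * α * c2 x k ≠ 0 ∧ 1 + α * c1 x k ≠ 0 ∧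
        1 + α * miuraMR1 α ε x (Sum.inl k) ≠ 0) →
      PullbackAt (miuraMR1 α ε) (mrtlPm α ε) (rtlM α) x) ∧
    (∀ x : Phase N,
      (∀ k : ZMod N, 1 + ε * α * c2 x k ≠ 0 ∧ 1 + α * c1 x k ≠ 0 ∧
        1 + α * miuraMR2 α ε x (Sum.inl k) ≠ 0) →
      PullbackAt (miuraMR2 α ε) (mrtlPm α ε) (rtlM α) x) := by
  refine ⟨fun x hx => ⟨?_, ?_, ?_, ?_⟩, fun x => ?_, fun x => ?_, fun x hx => ?_, fun x hx => ?_⟩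
  · exact poissonMapAt_miuraMR1_JMR12 hN hx
  · exact poissonMapAt_miuraMR2_JMR12 hN hx
  · exact poissonMapAt_miuraMR1_JMR23 hN hx
  · exact poissonMapAt_miuraMR2_JMR23 hN hx
  · exact pullbackAt_miuraMR1_rtlP
  · exact pullbackAt_miuraMR2_rtlP
  · exact pullbackAt_miuraMR1_rtlM (fun k => (hx k).1) fun k => (hx k).2.1
  · exact pullbackAt_miuraMR2_rtlM (fun k => (hx k).1) fun k => (hx k).2.1
end

section
/- Fix α ∈ ℝ. (a) Both Miura maps M_1, M_2 : ℛ𝒱 → ℛ𝒯 (given by M_1: b_k = u_k + v_{k−1}, a_k = u_k v_k and M_2: b_k = u_k + v_k, a_k = u_{k+1} v_k) are Poisson from (ℛ𝒱, {·,·}_{2α}^{ℛ𝒱}) to (ℛ𝒯, {·,·}_{2α}^{ℛ𝒯}), and M_1 is additionally Poisson from (ℛ𝒱, {·,·}_{3α}^{ℛ𝒱}) to (ℛ𝒯, {·,·}_{3α}^{ℛ𝒯}). (b) The pull-back of the flow RTL_+(α) under M_1 coincides with RVL_+(α), and, on the open set where 1 + α(u_k + v_{k−1}) ≠ 0 and 1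 + α(u_{k+1} + v_k) ≠ 0 for all k, the pull-back of RTL_−(α) under M_1 coincides with RVL_−(α). -/
open scoped BigOperators

/-- Quadratic Volterra structure matrix: `{u_k,v_k} = -u_k v_k`,
`{v_k,u_{k+1}} = -v_k u_{k+1}`. -/
noncomputable def JV2 {N : ℕ} (x : Phase N) : Idx N → Idx N → ℝ := fun i₁ i₂ =>
  match i₁, i₂ with
  | Sum.inl j, Sum.inr k =>
      if j = k then -(c1 x k * c2 x k)
      else if j = k + 1 then c2 x k * c1 x (k + 1) else 0
  | Sum.inr k, Sum.inl j =>
      if j = k then c1 x k * c2 x k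
      else if j = k + 1 then -(c2 x k * c1 x (k + 1)) else 0
  | _, _ => 0

/-- Cubic relativistic Volterra structure matrix `{·,·}_{3α}` on `ℛ𝒱`. -/
noncomputable def JRV3 (α : ℝ) {N : ℕ} (x : Phase N) : Idx N → Idx N → ℝ := fun i₁ i₂ =>
  match i₁, i₂ with
  | Sum.inl j, Sum.inr k =>
      if j = k then -(c1 x k * c2 x k * (c1 x k + c2 x k + α * c1 x k * c2 x k))
      else if j = k + 1 then c2 x k * c1 x (k + 1) * (c2 x k + c1 x (k + 1))
      else if j = k + 2 then α * c2 x k * c1 x (k + 1) * c2 x (k + 1) * c1 x (k + 2)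
      else 0
  | Sum.inr k, Sum.inl j =>
      if j = k then c1 x k * c2 x k * (c1 x k + c2 x k + α * c1 x k * c2 x k)
      else if j = k + 1 then -(c2 x k * c1 x (k + 1) * (c2 x k + c1 x (k + 1)))
      else if j = k + 2 then -(α * c2 x k * c1 x (k + 1) * c2 x (k + 1) * c1 x (k + 2))
      else 0
  | Sum.inl j, Sum.inl l =>
      if l = j + 1 then -(c1 x j * c2 x j * c1 x (j + 1) * (1 + α * c1 x j))
      else if j = l + 1 then c1 x l * c2 x l * c1 x (l + 1) * (1 + α * c1 x l)
      else 0
  | Sum.inr j, Sum.inr l =>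
      if l = j + 1 then -(c2 x j * c1 x (j + 1) * c2 x (j + 1) * (1 + α * c2 x (j + 1)))
      else if j = l + 1 then c2 x l * c1 x (l + 1) * c2 x (l + 1) * (1 + α * c2 x (l + 1))
      else 0

/-- The relativistic Volterra vector field `RVL₊(α)`, coordinates
`u_k = c1 x k`, `v_k = c2 x k`. -/
noncomputable def rvlP (α : ℝ) {N : ℕ} (x : Phase N) : Phase N := fun i =>
  match i with
  | Sum.inl k =>
      c1 x k * (c2 x k - c2 x (k - 1) + α * c1 x k * c2 x k
        - α * c1 x (k - 1) * c2 x (k - 1))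
  | Sum.inr k =>
      c2 x k * (c1 x (k + 1) - c1 x k + α * c1 x (k + 1) * c2 x (k + 1)
        - α * c1 x k * c2 x k)

/-- The relativistic Volterra vector field `RVL₋(α)`. -/
noncomputable def rvlM (α : ℝ) {N : ℕ} (x : Phase N) : Phase N := fun i =>
  match i with
  | Sum.inl k =>
      c1 x k * (c2 x k / (1 + α * (c1 x (k + 1) + c2 x k))
        - c2 x (k - 1) / (1 + α * (c1 x k + c2 x (k - 1))))
  | Sum.inr k =>
      c2 x k * (c1 x (k + 1) / (1 + α * (c1 x (k + 1) + c2 x k))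
        - c1 x k / (1 + α * (c1 x k + c2 x (k - 1))))

/-- Miura map `M₁ : 𝒱 → 𝒯`: `b_k = u_k + v_{k-1}`, `a_k = u_k v_k`. -/
noncomputable def miuraV1 {N : ℕ} (x : Phase N) : Phase N := fun i =>
  match i with
  | Sum.inl k => c1 x k + c2 x (k - 1)
  | Sum.inr k => c1 x k * c2 x k

/-- Miura map `M₂ : 𝒱 → 𝒯`: `b_k = u_k + v_k`, `a_k = u_{k+1} v_k`. -/
noncomputable def miuraV2 {N : ℕ} (x : Phase N) : Phase N := fun i =>
  match i with
  | Sum.inl k => c1 x k + c2 x k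
  | Sum.inr k => c1 x (k + 1) * c2 x k

/-!
Let `S` be the shift matrix, `(S w) k = w (k + 1)`. The blocks of the structure matrices and of the
Jacobians of the Miura maps are sums of matrices `diag(f) Sˢ`, which multiply by
`diag(f) Sˢ · diag(g) Sᵗ = diag(h) Sˢ⁺ᵗ` with `h k = f k * g (k + s)`. A structure matrix is
`K - Kᵀ` for a table `K` listing each nonzero bracket once: for `N ≥ 5` the index shifts
`-2, …, 2` are distinct, so that the case distinctions defining it never collide. A map with
Jacobian `D` carries `K - Kᵀ` to `K' - K'ᵀ` exactly when `D K Dᵀ - K'` is symmetric, and this is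
checked by comparing the coefficients of each `Sˢ`, which are polynomials in the coordinates.
-/

open Matrix

section DiagShift

variable {G R : Type*} [DecidableEq G]

/-- The matrix `diag(f) · Sˢ`, where `S` is the shift `(S w) k = w (k + 1)`. -/
def diagShift [Add G] [Zero R] (s : G) (f : G → R) : Matrix G G R :=
  of fun j l => if l = j + s then f j else 0

theorem diagShift_apply [Add G] [Zero R] (s : G) (f : G → R) (j l : G) :
    diagShift s f j l = if l = j + s then f j else 0 :=
  rfl

theorem diagShift_apply_eq_mul [Add G] [MulZeroOneClass R] (s : G) (f : G → R) (j l : G) :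
    diagShift s f j l = f j * if l = j + s then 1 else 0 := by
  rw [diagShift_apply, mul_boole]

theorem diagShift_transpose [AddGroup G] [Zero R] (s : G) (f : G → R) :
    (diagShift s f)ᵀ = diagShift (-s) fun k => f (k - s) := by
  ext j l
  simp only [transpose_apply, diagShift_apply, ← sub_eq_add_neg, eq_sub_iff_add_eq,
    eq_comm (a := j)]
  split_ifs with h
  · rw [← h, add_sub_cancel_right]
  · rfl

theorem diagShift_mul_diagShift [Fintype G] [AddSemigroup G] [NonUnitalNonAssocSemiring R]
    (s t : G) (f g : G → R) :
    diagShift s f * diagShift t g = diagShift (s + t) fun k => f k * g (k + s) := by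
  ext j l
  simp only [mul_apply, diagShift_apply, ite_mul, zero_mul, Finset.sum_ite_eq', Finset.mem_univ,
    if_true]
  simp only [mul_ite, mul_zero, add_assoc]

theorem diagShift_mulVec [Fintype G] [Add G] [NonUnitalNonAssocSemiring R] (s : G) (f w : G → R) :
    diagShift s f *ᵥ w = fun k => f k * w (k + s) := by
  ext j
  simp [mulVec, dotProduct, diagShift_apply]

end DiagShift

section Skew

variable {m n R : Type*}

/-- The antisymmetric matrix `K - Kᵀ`. It turns a table `K` listing each nonzero bracket once into
the full structure matrix. -/
def skew [Sub R] (K : Matrix n n R) : Matrix n n R :=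
  K - Kᵀ

theorem skew_apply [Sub R] (K : Matrix n n R) (i j : n) : skew K i j = K i j - K j i :=
  rfl

theorem skew_fromBlocks_congr [AddGroup R] {A A' : Matrix m m R} {B B' : Matrix m n R}
    {C C' : Matrix n m R} {D D' : Matrix n n R} (hA : skew A = skew A') (hB : B - Cᵀ = B' - C'ᵀ)
    (hD : skew D = skew D') : skew (fromBlocks A B C D) = skew (fromBlocks A' B' C' D') := by
  ext (i | i) (j | j)
  · exact congr_fun₂ hA i j
  · exact congr_fun₂ hB i j
  · simpa [skew] using congr_arg Neg.neg (congr_fun₂ hB j i)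
  · exact congr_fun₂ hD i j

theorem mul_skew_mul_transpose [Fintype n] [CommRing R] (A : Matrix m n R) (K : Matrix n n R) :
    A * skew K * Aᵀ = skew (A * K * Aᵀ) := by
  simp only [skew, Matrix.mul_sub, Matrix.sub_mul, transpose_mul, transpose_transpose,
    Matrix.mul_assoc]

end Skew

section Jacobian

variable {N : ℕ} [NeZero N]

/-- The matrix `Dφ(x)` of partial derivatives of the components of `φ`. -/
noncomputable def jacobian (φ : Phase N → Phase N) (x : Phase N) : Matrix (Idx N) (Idx N) ℝ :=
  of fun i k => pderiv k (fun y => φ y i) x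

theorem poissonMapAt_iff_jacobian {φ : Phase N → Phase N} {J J' : SM N} {x : Phase N} :
    PoissonMapAt φ J J' x ↔ jacobian φ x * of (J x) * (jacobian φ x)ᵀ = of (J' (φ x)) := by
  simp only [PoissonMapAt, ← Matrix.ext_iff, mul_apply, Finset.sum_mul, transpose_apply, jacobian,
    of_apply]
  exact forall₂_congr fun i j => by rw [Finset.sum_comm]

theorem pullbackAt_iff_jacobian {φ f g : Phase N → Phase N} {x : Phase N} :
    PullbackAt φ f g x ↔ jacobian φ x *ᵥ f x = g (φ x) :=
  funext_iff.symm

theorem pderiv_coord (p i : Idx N) (x : Phase N) :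
    pderiv i (fun y => y p) x = if p = i then 1 else 0 := by
  rw [pderiv, (hasFDerivAt_apply p x).fderiv, ContinuousLinearMap.proj_apply, Pi.single_apply]

theorem pderiv_add {F G : Phase N → ℝ} {x : Phase N} (hF : DifferentiableAt ℝ F x)
    (hG : DifferentiableAt ℝ G x) (i : Idx N) :
    pderiv i (fun y => F y + G y) x = pderiv i F x + pderiv i G x := by
  simp only [pderiv, fderiv_fun_add hF hG, _root_.add_apply]

theorem pderiv_mul {F G : Phase N → ℝ} {x : Phase N} (hF : DifferentiableAt ℝ F x)
    (hG : DifferentiableAt ℝ G x) (i : Idx N) :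
    pderiv i (fun y => F y * G y) x = F x * pderiv i G x + G x * pderiv i F x := by
  simp only [pderiv, fderiv_fun_mul hF hG, _root_.add_apply,
    _root_.smul_apply, smul_eq_mul]

theorem jacobian_miuraV1 (x : Phase N) :
    jacobian miuraV1 x = fromBlocks (diagShift 0 1) (diagShift (-1) 1)
      (diagShift 0 (c2 x)) (diagShift 0 (c1 x)) := by
  ext (j | j) (l | l) <;>
    simp [jacobian, miuraV1, c1, c2, pderiv_add, pderiv_mul, pderiv_coord, differentiableAt_apply,
      diagShift_apply, sub_eq_add_neg, eq_comm (a := l)]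

theorem jacobian_miuraV2 (x : Phase N) :
    jacobian miuraV2 x = fromBlocks (diagShift 0 1) (diagShift 0 1)
      (diagShift 1 (c2 x)) (diagShift 0 fun k => c1 x (k + 1)) := by
  ext (j | j) (l | l) <;>
    simp [jacobian, miuraV2, c1, c2, pderiv_add, pderiv_mul, pderiv_coord, differentiableAt_apply,
      diagShift_apply, eq_comm (a := l)]

end Jacobian

section StructureMatrices

variable {N : ℕ}

theorem zmod_natCast_ne_zero {n : ℕ} (hn : 0 < n) (hN : n < N) : (n : ZMod N) ≠ 0 := by
  rw [Ne, ZMod.natCast_eq_zero_iff]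
  exact Nat.not_dvd_of_pos_of_lt hn hN

theorem JV2_eq_skew (hN : 2 ≤ N) (x : Phase N) :
    of (JV2 x) = skew (fromBlocks 0 (diagShift 0 fun k => -(c1 x k * c2 x k))
      (diagShift 1 fun k => -(c2 x k * c1 x (k + 1))) 0) := by
  have h1 : (1 : ZMod N) ≠ 0 := mod_cast zmod_natCast_ne_zero one_pos hN
  ext (j | j) (l | l) <;>
    simp only [JV2, skew_apply, diagShift_apply, of_apply, fromBlocks_apply₁₁,
      fromBlocks_apply₁₂, fromBlocks_apply₂₁, fromBlocks_apply₂₂, Matrix.zero_apply] <;>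
    grind

theorem JT2_eq_skew (hN : 3 ≤ N) (x : Phase N) :
    of (JT2 x) = skew (fromBlocks
      (diagShift 1 fun k => -c2 x k)
      (diagShift 0 fun k => -(c1 x k * c2 x k))
      (diagShift 1 fun k => -(c2 x k * c1 x (k + 1)))
      (diagShift 1 fun k => -(c2 x k * c2 x (k + 1)))) := by
  have h2 : (2 : ZMod N) ≠ 0 := mod_cast zmod_natCast_ne_zero two_pos (by lia)
  ext (j | j) (l | l) <;>
    simp only [JT2, skew_apply, diagShift_apply, of_apply, fromBlocks_apply₁₁,
      fromBlocks_apply₁₂, fromBlocks_apply₂₁, fromBlocks_apply₂₂] <;>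
    grind

theorem JRV3_eq_skew (hN : 3 ≤ N) (α : ℝ) (x : Phase N) :
    of (JRV3 α x) = skew (fromBlocks
      (diagShift 1 fun k => -(c1 x k * c2 x k * c1 x (k + 1) * (1 + α * c1 x k)))
      (diagShift 0 fun k => -(c1 x k * c2 x k * (c1 x k + c2 x k + α * c1 x k * c2 x k)))
      (diagShift 1 (fun k => -(c2 x k * c1 x (k + 1) * (c2 x k + c1 x (k + 1)))) +
        diagShift 2 fun k => -(α * c2 x k * c1 x (k + 1) * c2 x (k + 1) * c1 x (k + 2)))
      (diagShift 1 fun k =>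
        -(c2 x k * c1 x (k + 1) * c2 x (k + 1) * (1 + α * c2 x (k + 1))))) := by
  have h2 : (2 : ZMod N) ≠ 0 := mod_cast zmod_natCast_ne_zero two_pos (by lia)
  ext (j | j) (l | l) <;>
    simp only [JRV3, skew_apply, diagShift_apply, of_apply, Matrix.add_apply, fromBlocks_apply₁₁,
      fromBlocks_apply₁₂, fromBlocks_apply₂₁, fromBlocks_apply₂₂] <;>
    grind

theorem JR3_eq_skew (hN : 5 ≤ N) (α : ℝ) (x : Phase N) :
    of (JR3 α x) = skew (fromBlocks
      (diagShift 1 fun k =>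
        -(c2 x k * (c1 x k + c1 x (k + 1))) - α * c1 x k * c2 x k * c1 x (k + 1))
      (diagShift 0 (fun k => -(c2 x k * (c1 x k ^ 2 + c2 x k)) - α * c1 x k * c2 x k ^ 2) +
        diagShift 1 fun k => -(c2 x k * c2 x (k + 1)) - α * c1 x k * c2 x k * c2 x (k + 1))
      (diagShift 1 (fun k =>
          -(c2 x k * (c1 x (k + 1) ^ 2 + c2 x k)) - α * c2 x k ^ 2 * c1 x (k + 1)) +
        diagShift 2 fun k =>
          -(c2 x k * c2 x (k + 1)) - α * c2 x k * c2 x (k + 1) * c1 x (k + 2))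
      (diagShift 1 (fun k => -(2 * c2 x k * c1 x (k + 1) * c2 x (k + 1)) -
          α * c2 x k * c2 x (k + 1) * (c2 x k + c2 x (k + 1))) +
        diagShift 2 fun k => -(α * c2 x k * c2 x (k + 1) * c2 x (k + 2)))) := by
  have h3 : (3 : ZMod N) ≠ 0 := mod_cast zmod_natCast_ne_zero three_pos (by lia)
  have h4 : (4 : ZMod N) ≠ 0 := mod_cast zmod_natCast_ne_zero four_pos (by lia)
  ext (j | j) (l | l) <;>
    simp only [JR3, skew_apply, diagShift_apply, of_apply, Matrix.add_apply, fromBlocks_apply₁₁,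
      fromBlocks_apply₁₂, fromBlocks_apply₂₁, fromBlocks_apply₂₂] <;>
    grind

end StructureMatrices

section Miura

variable {N : ℕ}

theorem c1_miuraV1 (x : Phase N) (k : ZMod N) : c1 (miuraV1 x) k = c1 x k + c2 x (k - 1) :=
  rfl

theorem c2_miuraV1 (x : Phase N) (k : ZMod N) : c2 (miuraV1 x) k = c1 x k * c2 x k :=
  rfl

theorem c1_miuraV2 (x : Phase N) (k : ZMod N) : c1 (miuraV2 x) k = c1 x k + c2 x k :=
  rfl

theorem c2_miuraV2 (x : Phase N) (k : ZMod N) : c2 (miuraV2 x) k = c1 x (k + 1) * c2 x k :=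
  rfl

variable [NeZero N]

theorem poissonMapAt_miuraV1_JV2_JT2 (hN : 3 ≤ N) (x : Phase N) :
    PoissonMapAt miuraV1 JV2 JT2 x := by
  rw [poissonMapAt_iff_jacobian, jacobian_miuraV1, JV2_eq_skew (by lia), JT2_eq_skew hN,
    mul_skew_mul_transpose]
  simp only [fromBlocks_multiply, fromBlocks_transpose, diagShift_mul_diagShift,
    diagShift_transpose, Matrix.mul_zero, zero_add, add_zero]
  refine skew_fromBlocks_congr ?_ ?_ ?_ <;> ext j l <;>
    simp only [skew, transpose_add, diagShift_transpose, Matrix.sub_apply, Matrix.add_apply,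
      diagShift_apply_eq_mul, Pi.one_apply, c1_miuraV1, c2_miuraV1] <;>
    ring_nf

theorem poissonMapAt_miuraV2_JV2_JT2 (hN : 3 ≤ N) (x : Phase N) :
    PoissonMapAt miuraV2 JV2 JT2 x := by
  rw [poissonMapAt_iff_jacobian, jacobian_miuraV2, JV2_eq_skew (by lia), JT2_eq_skew hN,
    mul_skew_mul_transpose]
  simp only [fromBlocks_multiply, fromBlocks_transpose, diagShift_mul_diagShift,
    diagShift_transpose, Matrix.mul_zero, zero_add, add_zero]
  refine skew_fromBlocks_congr ?_ ?_ ?_ <;> ext j l <;>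
    simp only [skew, transpose_add, diagShift_transpose, Matrix.sub_apply, Matrix.add_apply,
      diagShift_apply_eq_mul, Pi.one_apply, c1_miuraV2, c2_miuraV2] <;>
    ring_nf

theorem poissonMapAt_miuraV1_JRV3_JR3 (hN : 5 ≤ N) (α : ℝ) (x : Phase N) :
    PoissonMapAt miuraV1 (JRV3 α) (JR3 α) x := by
  rw [poissonMapAt_iff_jacobian, jacobian_miuraV1, JRV3_eq_skew (by lia), JR3_eq_skew hN,
    mul_skew_mul_transpose]
  simp only [fromBlocks_multiply, fromBlocks_transpose, diagShift_mul_diagShift,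
    diagShift_transpose, Matrix.mul_add, Matrix.add_mul]
  refine skew_fromBlocks_congr ?_ ?_ ?_ <;> ext j l <;>
    simp only [skew, transpose_add, diagShift_transpose, Matrix.sub_apply, Matrix.add_apply,
      diagShift_apply_eq_mul, Pi.one_apply, c1_miuraV1, c2_miuraV1] <;>
    ring_nf

theorem pullbackAt_miuraV1_rvlP_rtlP (α : ℝ) (x : Phase N) :
    PullbackAt miuraV1 (rvlP α) (rtlP α) x := by
  rw [pullbackAt_iff_jacobian, jacobian_miuraV1, fromBlocks_mulVec]
  ext (k | k) <;>
    simp only [diagShift_mulVec, Function.comp_apply, Sum.elim_inl, Sum.elim_inr, Pi.add_apply,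
      Pi.one_apply, rvlP, rtlP, c1_miuraV1, c2_miuraV1] <;>
    ring_nf

theorem pullbackAt_miuraV1_rvlM_rtlM (α : ℝ) (x : Phase N) :
    PullbackAt miuraV1 (rvlM α) (rtlM α) x := by
  rw [pullbackAt_iff_jacobian, jacobian_miuraV1, fromBlocks_mulVec]
  ext (k | k) <;>
    simp only [diagShift_mulVec, Function.comp_apply, Sum.elim_inl, Sum.elim_inr, Pi.add_apply,
      Pi.one_apply, rvlM, rtlM, c1_miuraV1, c2_miuraV1] <;>
    ring_nf

end Miura

/-- the Miura maps `M₁, M₂ : ℛ𝒱 → ℛ𝒯` are Poisson for the quadratic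
brackets, `M₁` additionally for the cubic brackets; the pull-back of `RTL₊(α)`
under `M₁` is `RVL₊(α)`, and where all `1 + α(u_k + v_{k-1}) ≠ 0` and
`1 + α(u_{k+1} + v_k) ≠ 0`, the pull-back of `RTL₋(α)` under `M₁` is `RVL₋(α)`. -/
theorem stmt19 (N : ℕ) [NeZero N] (hN : 5 ≤ N) (α : ℝ) :
    (∀ x : Phase N, PoissonMapAt miuraV1 JV2 JT2 x) ∧
    (∀ x : Phase N, PoissonMapAt miuraV2 JV2 JT2 x) ∧
    (∀ x : Phase N, PoissonMapAt miuraV1 (JRV3 α) (JR3 α) x) ∧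
    (∀ x : Phase N, PullbackAt miuraV1 (rvlP α) (rtlP α) x) ∧
    (∀ x : Phase N,
      (∀ k : ZMod N, 1 + α * (c1 x k + c2 x (k - 1)) ≠ 0 ∧
        1 + α * (c1 x (k + 1) + c2 x k) ≠ 0) →
      PullbackAt miuraV1 (rvlM α) (rtlM α) x) := by
  exact ⟨poissonMapAt_miuraV1_JV2_JT2 (by lia), poissonMapAt_miuraV2_JV2_JT2 (by lia),
    poissonMapAt_miuraV1_JRV3_JR3 hN α, pullbackAt_miuraV1_rvlP_rtlP α,
    fun x _ => pullbackAt_miuraV1_rvlM_rtlM α x⟩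
end
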